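/- Let α ∈ (1/3,1/2], let (W,𝕎) be an ℝ^d-valued α-Hölder rough path on [0,1], and let (Y,Y') be a controlled rough path with Y : [0,1] → L(ℝ^d,ℝ^n) and Y' : [0,1] → L(ℝ^d, L(ℝ^d,ℝ^n)). Then there exists a function I on pairs 0 ≤ s ≤ t ≤ 1 with values in ℝ^n such that: (i) for every s ≤ t and every ε > 0 there is δ > 0 so that for every partition s = t_0 < t_1 < … < t_k = t with max_i (t_{i+1}−t_i) < δ one has ‖Σ_i (Y_{t_i}·(W_{t_{i+1}}−W_{t_i}) + Y'_{t_i}·𝕎_{t_i,t_{i+1}}) − I(s,t)‖ < ε; and (ii) there exists a constant C depending only on α such that ‖I(s,t) − Y_s·(W_t−W_s) − Y'_s·𝕎_{s,t}‖ ≤ C·(‖W‖_α·‖R^Y‖_{2α} + ‖𝕎‖_{2α}·‖Y'‖_α)·|t−s|^{3α} for all 0 ≤ s ≤ t ≤ 1. -/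

import Mathlib

noncomputable section

/-- The set of Hölder quotients `‖f t - f s‖ / |t - s| ^ β` over `s ≠ t` in `[a,b]`. -/
def holderSet {X : Type*} [NormedAddCommGroup X] (β a b : ℝ) (f : ℝ → X) : Set ℝ :=
  {C : ℝ | ∃ s t : ℝ, s ∈ Set.Icc a b ∧ t ∈ Set.Icc a b ∧ s ≠ t ∧
    C = ‖f t - f s‖ / |t - s| ^ β}

/-- The `β`-Hölder seminorm of `f` on `[a,b]`. -/
def holderNorm {X : Type*} [NormedAddCommGroup X] (β a b : ℝ) (f : ℝ → X) : ℝ :=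
  sSup (holderSet β a b f)

/-- The set of Hölder quotients `‖R s t‖ / (t - s) ^ β` over `s < t` in `[a,b]` for a
two-parameter function `R`. -/
def holder2Set {X : Type*} [NormedAddCommGroup X] (β a b : ℝ) (R : ℝ → ℝ → X) : Set ℝ :=
  {C : ℝ | ∃ s t : ℝ, s ∈ Set.Icc a b ∧ t ∈ Set.Icc a b ∧ s < t ∧
    C = ‖R s t‖ / (t - s) ^ β}

/-- The `β`-Hölder seminorm of a two-parameter function on `[a,b]`. -/
def holder2Norm {X : Type*} [NormedAddCommGroup X] (β a b : ℝ) (R : ℝ → ℝ → X) : ℝ :=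
  sSup (holder2Set β a b R)

/-- The supremum norm of `f` on `[a,b]`. -/
def supNorm {X : Type*} [NormedAddCommGroup X] (a b : ℝ) (f : ℝ → X) : ℝ :=
  sSup {C : ℝ | ∃ t ∈ Set.Icc a b, C = ‖f t‖}

/-- The remainder `R^Y_{s,t} = Y_t - Y_s - Y'_s (W_t - W_s)` of a controlled rough path. -/
def rem {d : ℕ} {X : Type*} [NormedAddCommGroup X] [NormedSpace ℝ X]
    (W : ℝ → Fin d → ℝ) (Y : ℝ → X) (Y' : ℝ → (Fin d → ℝ) →L[ℝ] X) : ℝ → ℝ → X :=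
  fun s t => Y t - Y s - Y' s (W t - W s)

/-- The action of `B ∈ L(ℝ^d, L(ℝ^d, X))`, viewed as an element of `L(ℝ^d ⊗ ℝ^d, X)`, on a
second-order increment `M ∈ ℝ^d ⊗ ℝ^d` (represented as a `d × d` matrix). -/
def bilApply {d : ℕ} {X : Type*} [NormedAddCommGroup X] [NormedSpace ℝ X]
    (B : (Fin d → ℝ) →L[ℝ] ((Fin d → ℝ) →L[ℝ] X)) (M : Fin d → Fin d → ℝ) : X :=
  ∑ i : Fin d, ∑ j : Fin d, M i j • B (Pi.single i 1) (Pi.single j 1)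

/-- `PartitionLimit a b S I` says: the compensated Riemann sums `∑ S (tᵢ) (tᵢ₊₁)` over
partitions `a = t₀ < t₁ < … < t_k = b` converge to `I` as the mesh tends to `0`. -/
def PartitionLimit {X : Type*} [NormedAddCommGroup X] (a b : ℝ) (S : ℝ → ℝ → X) (I : X) :
    Prop :=
  ∀ ε : ℝ, 0 < ε → ∃ δ : ℝ, 0 < δ ∧ ∀ (k : ℕ) (π : ℕ → ℝ),
    0 < k → π 0 = a → π k = b → (∀ i < k, π i < π (i + 1)) →
    (∀ i < k, π (i + 1) - π i < δ) →
    ‖(∑ i ∈ Finset.range k, S (π i) (π (i + 1))) - I‖ < ε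

/-! The rough integral is the sewing of the germ `Ξ s t = Y_s (W_t - W_s) + Y'_s 𝕎_{s,t}`, whose
defect of additivity is, by Chen's relation, `-R_{s,u} (W_t - W_u) - (Y'_u - Y'_s) 𝕎_{u,t}`, hence
`O((t - s) ^ θ)` with `θ = 3α > 1`.

For a germ with such a defect, every Riemann sum over a partition of `[s,t]` is within
`A (t - s) ^ θ` of `Ξ s t`: removing the partition interval around the midpoint costs two defects
and leaves two partitions of at most half the length, and `2 · 2^{-θ} < 1` closes the induction.
Applied on each interval of a partition of mesh `δ`, this bounds the effect of a refinement by
`A δ ^ (θ - 1) (t - s)`. Two partitions have a common refinement, so the Riemann sums form a Cauchy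
net as the mesh tends to `0`; its limit is the integral, and inherits the bound. -/

section Partition

variable {T : Type*}

/-- `π 0 ≤ π 1 ≤ … ≤ π k` is a partition of `[s,t]`. Points may be repeated, so that clamping
a partition to a subinterval gives a partition with the same number of intervals. -/
structure IsPartition [Preorder T] (s t : T) (k : ℕ) (π : ℕ → T) : Prop where
  zero_eq : π 0 = s
  last_eq : π k = t
  monotoneOn : MonotoneOn π (Set.Iic k)

namespace IsPartition

section Preorder

variable [Preorder T] {s t : T} {k : ℕ} {π : ℕ → T}

lemma mem_Icc (h : IsPartition s t k π) {i : ℕ} (hi : i ≤ k) : π i ∈ Set.Icc s t :=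
  ⟨h.zero_eq ▸ h.monotoneOn (Nat.zero_le k) hi (Nat.zero_le i),
    h.last_eq ▸ h.monotoneOn hi Set.self_mem_Iic hi⟩

lemma left_le_right (h : IsPartition s t k π) : s ≤ t :=
  h.zero_eq ▸ (h.mem_Icc (Nat.zero_le k)).2

lemma le_succ (h : IsPartition s t k π) {i : ℕ} (hi : i < k) : π i ≤ π (i + 1) :=
  h.monotoneOn hi.le (Nat.succ_le_of_lt hi) (Nat.le_succ i)

lemma take (h : IsPartition s t k π) {m : ℕ} (hm : m ≤ k) : IsPartition s (π m) m π where
  zero_eq := h.zero_eq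
  last_eq := rfl
  monotoneOn := h.monotoneOn.mono (Set.Iic_subset_Iic.2 hm)

lemma drop {m r : ℕ} (h : IsPartition s t (m + r) π) :
    IsPartition (π m) t r (fun i => π (m + i)) where
  zero_eq := rfl
  last_eq := h.last_eq
  monotoneOn _ hi _ hj hij :=
    h.monotoneOn (Nat.add_le_add_left hi m) (Nat.add_le_add_left hj m) (Nat.add_le_add_left hij m)

end Preorder

section LinearOrder

variable [LinearOrder T] {s t : T} {k : ℕ} {π : ℕ → T}

lemma exists_le_le_succ (h : IsPartition s t k π) (hk : 0 < k) {c : T} (hc : c ∈ Set.Icc s t) :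
    ∃ m < k, π m ≤ c ∧ c ≤ π (m + 1) := by
  have hlast : c ≤ π (k - 1 + 1) := by rw [Nat.sub_add_cancel hk, h.last_eq]; exact hc.2
  have hex : ∃ m, c ≤ π (m + 1) := ⟨k - 1, hlast⟩
  have hlt : Nat.find hex < k := (Nat.find_min' hex hlast).trans_lt (Nat.sub_lt hk one_pos)
  refine ⟨Nat.find hex, hlt, ?_, Nat.find_spec hex⟩
  rcases hm : Nat.find hex with _ | m
  · exact h.zero_eq.trans_le hc.1
  · exact (not_le.1 (Nat.find_min hex (hm ▸ Nat.lt_succ_self m))).le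

end LinearOrder

end IsPartition

/-- The point of `[u,v]` closest to `x`. -/
def clamp [LinearOrder T] (u v x : T) : T := max u (min v x)

lemma IsPartition.map_clamp [LinearOrder T] {s t : T} {k : ℕ} {π : ℕ → T} (h : IsPartition s t k π)
    {u v : T} (hsu : s ≤ u) (huv : u ≤ v) (hvt : v ≤ t) :
    IsPartition u v k (fun i => clamp u v (π i)) where
  zero_eq := by simp only [clamp, h.zero_eq, min_eq_right (hsu.trans huv), max_eq_left hsu]
  last_eq := by simp only [clamp, h.last_eq, min_eq_left hvt, max_eq_right huv]
  monotoneOn _ hi _ hj hij := max_le_max le_rfl (min_le_min le_rfl (h.monotoneOn hi hj hij))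

/-- The left-endpoint Riemann sum of the germ `Ξ` over the first `k` intervals of `π`. -/
def riemannSum {M : Type*} [AddCommMonoid M] (Ξ : T → T → M) (π : ℕ → T) (k : ℕ) : M :=
  ∑ i ∈ Finset.range k, Ξ (π i) (π (i + 1))

lemma riemannSum_add {M : Type*} [AddCommMonoid M] (Ξ : T → T → M) (π : ℕ → T) (m r : ℕ) :
    riemannSum Ξ π (m + r) = riemannSum Ξ π m + riemannSum Ξ (fun i => π (m + i)) r := by
  simp only [riemannSum, Finset.sum_range_add, add_assoc]

lemma riemannSum_succ {M : Type*} [AddCommMonoid M] (Ξ : T → T → M) (π : ℕ → T) (k : ℕ) :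
    riemannSum Ξ π (k + 1) = riemannSum Ξ π k + Ξ (π k) (π (k + 1)) :=
  Finset.sum_range_succ _ k

section CommonRefinement

variable {M : Type*} [LinearOrder T] {Ξ : T → T → M} {a b : T}

-- Both sides are `Ξ` on the intersection of `[u,v]` and `[x,y]` if these intervals overlap;
-- otherwise they are values of `Ξ` at two possibly different points of the diagonal.
lemma germ_clamp_comm [Zero M] (hdiag : ∀ s ∈ Set.Icc a b, Ξ s s = 0) {u v x y : T}
    (hau : a ≤ u) (huv : u ≤ v) (hvb : v ≤ b) (hax : a ≤ x) (hxy : x ≤ y) (hyb : y ≤ b) :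
    Ξ (clamp u v x) (clamp u v y) = Ξ (clamp x y u) (clamp x y v) := by
  unfold clamp
  rcases le_total v x with hvx | hxv
  · rw [min_eq_left hvx, min_eq_left (hvx.trans hxy), max_eq_right huv,
      min_eq_right (huv.trans (hvx.trans hxy)), min_eq_right (hvx.trans hxy),
      max_eq_left (huv.trans hvx), max_eq_left hvx, hdiag v ⟨hau.trans huv, hvb⟩,
      hdiag x ⟨hax, hxy.trans hyb⟩]
  rcases le_total y u with hyu | huy
  · rw [min_eq_right hxv, min_eq_right (hyu.trans huv), max_eq_left (hxy.trans hyu),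
      max_eq_left hyu, min_eq_left hyu, min_eq_left (hyu.trans huv), max_eq_right hxy,
      hdiag u ⟨hau, huv.trans hvb⟩, hdiag y ⟨hax.trans hxy, hyb⟩]
  · rw [min_eq_right hxv, min_eq_right huy, max_eq_right (le_min huv huy),
      max_eq_right (le_min hxy hxv), max_comm, min_comm]

lemma sum_riemannSum_clamp_comm [AddCommMonoid M] (hdiag : ∀ s ∈ Set.Icc a b, Ξ s s = 0)
    {k l : ℕ} {π ρ : ℕ → T} (hπ : IsPartition a b k π) (hρ : IsPartition a b l ρ) :
    ∑ i ∈ Finset.range k, riemannSum Ξ (fun j => clamp (π i) (π (i + 1)) (ρ j)) l =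
      ∑ j ∈ Finset.range l, riemannSum Ξ (fun i => clamp (ρ j) (ρ (j + 1)) (π i)) k := by
  unfold riemannSum
  rw [Finset.sum_comm]
  refine Finset.sum_congr rfl fun j hj => Finset.sum_congr rfl fun i hi => ?_
  have hi := Finset.mem_range.1 hi
  have hj := Finset.mem_range.1 hj
  exact germ_clamp_comm hdiag (hπ.mem_Icc hi.le).1 (hπ.le_succ hi) (hπ.mem_Icc hi).2
    (hρ.mem_Icc hj.le).1 (hρ.le_succ hj) (hρ.mem_Icc hj).2

end CommonRefinement

/-- The partition of `[a,b]` into `N + 1` intervals of equal length. -/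
def uniformPartition (a b : ℝ) (N i : ℕ) : ℝ := a + i * ((b - a) / (N + 1))

lemma isPartition_uniformPartition {a b : ℝ} (hab : a ≤ b) (N : ℕ) :
    IsPartition a b (N + 1) (uniformPartition a b N) where
  zero_eq := by simp [uniformPartition]
  last_eq := by
    have hN : (N : ℝ) + 1 ≠ 0 := by positivity
    simp only [uniformPartition, Nat.cast_add, Nat.cast_one, mul_div_cancel₀ _ hN]
    ring
  monotoneOn i _ j _ hij := by
    have := sub_nonneg.2 hab
    unfold uniformPartition
    gcongr

lemma uniformPartition_succ_sub (a b : ℝ) (N i : ℕ) :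
    uniformPartition a b N (i + 1) - uniformPartition a b N i = (b - a) / (N + 1) := by
  simp only [uniformPartition, Nat.cast_add, Nat.cast_one]
  ring

lemma tendsto_uniformPartition_mesh_rpow (a b : ℝ) {p : ℝ} (hp : 0 < p) :
    Filter.Tendsto (fun N : ℕ => ((b - a) / ((N : ℝ) + 1)) ^ p) Filter.atTop (nhds 0) := by
  have hmesh : Filter.Tendsto (fun N : ℕ => (b - a) / ((N : ℝ) + 1)) Filter.atTop (nhds 0) :=
    tendsto_const_nhds.div_atTop
      (Filter.tendsto_atTop_add_const_right _ _ tendsto_natCast_atTop_atTop)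
  simpa only [Real.zero_rpow hp.ne'] using hmesh.rpow_const (Or.inr hp.le)

lemma IsPartition.sum_rpow_le {a b δ θ : ℝ} {k : ℕ} {π : ℕ → ℝ} (hπ : IsPartition a b k π)
    (hθ : 1 < θ) (hδ : ∀ i < k, π (i + 1) - π i ≤ δ) :
    ∑ i ∈ Finset.range k, (π (i + 1) - π i) ^ θ ≤ δ ^ (θ - 1) * (b - a) := by
  calc ∑ i ∈ Finset.range k, (π (i + 1) - π i) ^ θ
      ≤ ∑ i ∈ Finset.range k, δ ^ (θ - 1) * (π (i + 1) - π i) := by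
        refine Finset.sum_le_sum fun i hi => ?_
        have hi := Finset.mem_range.1 hi
        have hlen : 0 ≤ π (i + 1) - π i := sub_nonneg.2 (hπ.le_succ hi)
        calc (π (i + 1) - π i) ^ θ
            = (π (i + 1) - π i) ^ (θ - 1) * (π (i + 1) - π i) := by
              rw [← Real.rpow_add_one' hlen (by linarith), sub_add_cancel]
          _ ≤ δ ^ (θ - 1) * (π (i + 1) - π i) := by
              have := hδ i hi
              have : 0 ≤ θ - 1 := by linarith
              gcongr
    _ = δ ^ (θ - 1) * (b - a) := by
        rw [← Finset.mul_sum, Finset.sum_range_sub, hπ.zero_eq, hπ.last_eq]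

lemma partitionLimit_of_norm_riemannSum_sub_le {X : Type*} [NormedAddCommGroup X]
    {Ξ : ℝ → ℝ → X} {a b M p : ℝ} {I : X} (hp : 0 < p)
    (h : ∀ (k : ℕ) (π : ℕ → ℝ) (δ : ℝ), IsPartition a b k π →
      (∀ i < k, π (i + 1) - π i ≤ δ) → ‖riemannSum Ξ π k - I‖ ≤ M * δ ^ p) :
    PartitionLimit a b Ξ I := by
  intro ε hε
  have hlim : Filter.Tendsto (fun δ : ℝ => M * δ ^ p) (nhdsWithin 0 (Set.Ioi 0)) (nhds 0) := by
    have := (Real.continuousAt_rpow_const 0 p (Or.inr hp.le)).tendsto.const_mul M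
    rw [Real.zero_rpow hp.ne', mul_zero] at this
    exact this.mono_left nhdsWithin_le_nhds
  obtain ⟨δ, hδε, hδ⟩ := ((hlim.eventually_lt_const hε).and self_mem_nhdsWithin).exists
  refine ⟨δ, hδ, fun k π _ h0 hk hlt hmesh => ?_⟩
  have hπ : IsPartition a b k π := ⟨h0, hk, monotoneOn_of_le_succ Set.ordConnected_Iic
    fun i _ _ hi => (hlt i (Order.succ_le_iff.1 hi)).le⟩
  exact (h k π δ hπ fun i hi => (hmesh i hi).le).trans_lt hδε

end Partition

section Sewing

lemma rpow_le_half_rpow_mul_rpow {l L θ : ℝ} (hl : 0 ≤ l) (hlL : l ≤ L / 2) (hθ : 0 ≤ θ) :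
    l ^ θ ≤ (1 / 2) ^ θ * L ^ θ := by
  rw [← Real.mul_rpow (by norm_num) (by linarith)]
  exact Real.rpow_le_rpow hl (by linarith) hθ

/-- The constant `A` of the sewing lemma, the solution of `A = 2 + 2 · 2^{-θ} · A`. -/
def sewingConst (θ : ℝ) : ℝ := 2 / (1 - 2 * (1 / 2 : ℝ) ^ θ)

lemma two_mul_half_rpow_lt_one {θ : ℝ} (hθ : 1 < θ) : 2 * (1 / 2 : ℝ) ^ θ < 1 := by
  have := Real.rpow_lt_rpow_of_exponent_gt (x := (1 / 2 : ℝ)) (by norm_num) (by norm_num) hθ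
  rw [Real.rpow_one] at this
  linarith

lemma sewingConst_pos {θ : ℝ} (hθ : 1 < θ) : 0 < sewingConst θ :=
  div_pos two_pos (sub_pos.2 (two_mul_half_rpow_lt_one hθ))

lemma sewingConst_eq {θ : ℝ} (hθ : 1 < θ) :
    sewingConst θ = 2 + 2 * (1 / 2 : ℝ) ^ θ * sewingConst θ := by
  have hne : 1 - 2 * (1 / 2 : ℝ) ^ θ ≠ 0 := (sub_pos.2 (two_mul_half_rpow_lt_one hθ)).ne'
  unfold sewingConst
  field_simp
  ring

variable {X : Type*} [NormedAddCommGroup X] {Ξ : ℝ → ℝ → X} {a b K θ : ℝ}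

/-- The germ `Ξ` is almost additive on `[a,b]`: its defect of additivity on `s ≤ u ≤ t` is at most
`K (t - s) ^ θ`. For `θ > 1` this is the hypothesis of the sewing lemma. -/
def AlmostAdditiveOn (Ξ : ℝ → ℝ → X) (a b K θ : ℝ) : Prop :=
  ∀ s u t : ℝ, a ≤ s → s ≤ u → u ≤ t → t ≤ b → ‖Ξ s t - Ξ s u - Ξ u t‖ ≤ K * (t - s) ^ θ

namespace AlmostAdditiveOn

lemma mono (h : AlmostAdditiveOn Ξ a b K θ) {s t : ℝ} (has : a ≤ s) (htb : t ≤ b) :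
    AlmostAdditiveOn Ξ s t K θ :=
  fun x y z hx hxy hyz hz => h x y z (has.trans hx) hxy hyz (hz.trans htb)

lemma apply_self (h : AlmostAdditiveOn Ξ a b K θ) (hθ : θ ≠ 0) {s : ℝ} (hs : s ∈ Set.Icc a b) :
    Ξ s s = 0 := by
  have := h s s s hs.1 le_rfl le_rfl hs.2
  rw [sub_self, sub_self, zero_sub, norm_neg, Real.zero_rpow hθ, mul_zero] at this
  exact norm_le_zero_iff.1 this

lemma norm_add_germ_add_sub_le (h : AlmostAdditiveOn Ξ a b K θ) (hK : 0 ≤ K) (hθ : 0 ≤ θ) {x y : ℝ}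
    (hax : a ≤ x) (hxy : x ≤ y) (hyb : y ≤ b) (S S' : X) :
    ‖S + Ξ x y + S' - Ξ a b‖ ≤ ‖S - Ξ a x‖ + ‖S' - Ξ y b‖ + 2 * (K * (b - a) ^ θ) := by
  have hdefect_y : ‖Ξ a b - Ξ a y - Ξ y b‖ ≤ K * (b - a) ^ θ :=
    h a y b le_rfl (hax.trans hxy) hyb le_rfl
  have hdefect_x : ‖Ξ a y - Ξ a x - Ξ x y‖ ≤ K * (b - a) ^ θ := by
    refine (h a x y le_rfl hax hxy hyb).trans ?_
    gcongr
    linarith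
  calc ‖S + Ξ x y + S' - Ξ a b‖
      = ‖(S - Ξ a x) + (S' - Ξ y b) - (Ξ a b - Ξ a y - Ξ y b) - (Ξ a y - Ξ a x - Ξ x y)‖ := by
        congr 1
        abel
    _ ≤ ‖S - Ξ a x‖ + ‖S' - Ξ y b‖ + ‖Ξ a b - Ξ a y - Ξ y b‖ + ‖Ξ a y - Ξ a x - Ξ x y‖ := by
        refine (norm_sub_le _ _).trans (add_le_add_left ((norm_sub_le _ _).trans ?_) _)
        exact add_le_add_left (norm_add_le _ _) _
    _ ≤ ‖S - Ξ a x‖ + ‖S' - Ξ y b‖ + 2 * (K * (b - a) ^ θ) := by linarith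

theorem norm_riemannSum_sub_le (h : AlmostAdditiveOn Ξ a b K θ) (hK : 0 ≤ K) (hθ : 1 < θ)
    {k : ℕ} {π : ℕ → ℝ} (hπ : IsPartition a b k π) :
    ‖riemannSum Ξ π k - Ξ a b‖ ≤ sewingConst θ * K * (b - a) ^ θ := by
  induction k using Nat.strong_induction_on generalizing a b π with
  | _ k ih =>
  have hAK : 0 ≤ sewingConst θ * K := mul_nonneg (sewingConst_pos hθ).le hK
  have hab := hπ.left_le_right
  rcases Nat.eq_zero_or_pos k with rfl | hk
  · obtain rfl : a = b := hπ.zero_eq.symm.trans hπ.last_eq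
    rw [riemannSum, Finset.sum_range_zero, h.apply_self (by linarith) ⟨le_rfl, le_rfl⟩, sub_self,
      norm_zero]
    positivity
  obtain ⟨m, hmk, hm_le, hle_m⟩ :=
    hπ.exists_le_le_succ hk (c := (a + b) / 2) ⟨by linarith, by linarith⟩
  obtain ⟨r, rfl⟩ := Nat.exists_eq_add_of_le (Nat.succ_le_of_lt hmk)
  have hm := hπ.mem_Icc hmk.le
  have hm' := hπ.mem_Icc (Nat.succ_le_of_lt hmk)
  have hhalf {l : ℝ} (hl : 0 ≤ l) (hlab : l ≤ (b - a) / 2) :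
      l ^ θ ≤ (1 / 2) ^ θ * (b - a) ^ θ :=
    rpow_le_half_rpow_mul_rpow hl hlab (by linarith)
  have hleft : ‖riemannSum Ξ π m - Ξ a (π m)‖ ≤
      sewingConst θ * K * ((1 / 2) ^ θ * (b - a) ^ θ) :=
    (ih m hmk (h.mono le_rfl hm.2) (hπ.take hmk.le)).trans
      (mul_le_mul_of_nonneg_left (hhalf (by linarith [hm.1]) (by linarith)) hAK)
  have hright : ‖riemannSum Ξ (fun i => π (m + 1 + i)) r - Ξ (π (m + 1)) b‖ ≤
      sewingConst θ * K * ((1 / 2) ^ θ * (b - a) ^ θ) :=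
    (ih r (by omega) (h.mono hm'.1 le_rfl) hπ.drop).trans
      (mul_le_mul_of_nonneg_left (hhalf (by linarith [hm'.2]) (by linarith)) hAK)
  rw [riemannSum_add, riemannSum_succ]
  calc _ ≤ _ := h.norm_add_germ_add_sub_le hK (by linarith) hm.1 (hπ.le_succ hmk) hm'.2 _ _
    _ ≤ 2 * (sewingConst θ * K * ((1 / 2) ^ θ * (b - a) ^ θ)) + 2 * (K * (b - a) ^ θ) := by
        linarith
    _ = sewingConst θ * K * (b - a) ^ θ := by
        linear_combination (-(K * (b - a) ^ θ)) * sewingConst_eq hθ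

lemma norm_sum_riemannSum_clamp_sub_le (h : AlmostAdditiveOn Ξ a b K θ) (hK : 0 ≤ K)
    (hθ : 1 < θ) {k l : ℕ} {π ρ : ℕ → ℝ} (hπ : IsPartition a b k π) (hρ : IsPartition a b l ρ)
    {δ : ℝ} (hδ : ∀ i < k, π (i + 1) - π i ≤ δ) :
    ‖∑ i ∈ Finset.range k, riemannSum Ξ (fun j => clamp (π i) (π (i + 1)) (ρ j)) l -
      riemannSum Ξ π k‖ ≤ sewingConst θ * K * (b - a) * δ ^ (θ - 1) := by
  have hAK : 0 ≤ sewingConst θ * K := mul_nonneg (sewingConst_pos hθ).le hK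
  rw [riemannSum, ← Finset.sum_sub_distrib]
  calc _ ≤ ∑ i ∈ Finset.range k, sewingConst θ * K * (π (i + 1) - π i) ^ θ := by
        refine norm_sum_le_of_le _ fun i hi => ?_
        have hi := Finset.mem_range.1 hi
        have hleft := (hπ.mem_Icc hi.le).1
        have hright := (hπ.mem_Icc hi).2
        exact (h.mono hleft hright).norm_riemannSum_sub_le hK hθ
          (hρ.map_clamp hleft (hπ.le_succ hi) hright)
    _ ≤ sewingConst θ * K * (δ ^ (θ - 1) * (b - a)) := by
        rw [← Finset.mul_sum]
        exact mul_le_mul_of_nonneg_left (hπ.sum_rpow_le hθ hδ) hAK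
    _ = sewingConst θ * K * (b - a) * δ ^ (θ - 1) := by ring

lemma norm_riemannSum_sub_riemannSum_le (h : AlmostAdditiveOn Ξ a b K θ) (hK : 0 ≤ K)
    (hθ : 1 < θ) {k l : ℕ} {π ρ : ℕ → ℝ} (hπ : IsPartition a b k π) (hρ : IsPartition a b l ρ)
    {δ η : ℝ} (hδ : ∀ i < k, π (i + 1) - π i ≤ δ) (hη : ∀ j < l, ρ (j + 1) - ρ j ≤ η) :
    ‖riemannSum Ξ π k - riemannSum Ξ ρ l‖ ≤
      sewingConst θ * K * (b - a) * (δ ^ (θ - 1) + η ^ (θ - 1)) := by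
  have hπ_refine := h.norm_sum_riemannSum_clamp_sub_le hK hθ hπ hρ hδ
  have hρ_refine := h.norm_sum_riemannSum_clamp_sub_le hK hθ hρ hπ hη
  rw [← sum_riemannSum_clamp_comm (fun s hs => h.apply_self (by linarith) hs) hπ hρ]
    at hρ_refine
  rw [norm_sub_rev] at hπ_refine
  rw [mul_add]
  exact (norm_sub_le_norm_sub_add_norm_sub _ _ _).trans (add_le_add hπ_refine hρ_refine)

lemma cauchySeq_riemannSum_uniformPartition (h : AlmostAdditiveOn Ξ a b K θ) (hK : 0 ≤ K)
    (hθ : 1 < θ) (hab : a ≤ b) :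
    CauchySeq fun N => riemannSum Ξ (uniformPartition a b N) (N + 1) := by
  have := sub_nonneg.2 hab
  refine cauchySeq_of_le_tendsto_0 (fun N : ℕ => sewingConst θ * K * (b - a) *
    (((b - a) / (N + 1)) ^ (θ - 1) + ((b - a) / (N + 1)) ^ (θ - 1))) (fun m n N hm hn => ?_) ?_
  · have hmesh {n : ℕ} (hn : N ≤ n) (i : ℕ) :
        uniformPartition a b n (i + 1) - uniformPartition a b n i ≤ (b - a) / (N + 1) := by
      rw [uniformPartition_succ_sub]
      gcongr
    rw [dist_eq_norm]
    exact h.norm_riemannSum_sub_riemannSum_le hK hθ (isPartition_uniformPartition hab m)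
      (isPartition_uniformPartition hab n) (fun i _ => hmesh hm i) (fun i _ => hmesh hn i)
  · have hlim := tendsto_uniformPartition_mesh_rpow a b (sub_pos.2 hθ)
    simpa only [add_zero, mul_zero] using (hlim.add hlim).const_mul (sewingConst θ * K * (b - a))

theorem exists_partitionLimit [CompleteSpace X] (h : AlmostAdditiveOn Ξ a b K θ) (hK : 0 ≤ K)
    (hθ : 1 < θ) (hab : a ≤ b) :
    ∃ I : X, PartitionLimit a b Ξ I ∧ ‖I - Ξ a b‖ ≤ sewingConst θ * K * (b - a) ^ θ := by
  have huniform := isPartition_uniformPartition hab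
  obtain ⟨I, hI⟩ :=
    cauchySeq_tendsto_of_complete (h.cauchySeq_riemannSum_uniformPartition hK hθ hab)
  refine ⟨I, partitionLimit_of_norm_riemannSum_sub_le (sub_pos.2 hθ)
    (M := sewingConst θ * K * (b - a)) fun k π δ hπ hδ => ?_,
    le_of_tendsto' (hI.sub_const _).norm fun N => h.norm_riemannSum_sub_le hK hθ (huniform N)⟩
  have hbound := (((tendsto_uniformPartition_mesh_rpow a b (sub_pos.2 hθ)).const_add
    (δ ^ (θ - 1))).const_mul (sewingConst θ * K * (b - a)))
  rw [add_zero] at hbound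
  exact le_of_tendsto_of_tendsto' (hI.const_sub _).norm hbound fun N =>
    h.norm_riemannSum_sub_riemannSum_le hK hθ hπ (huniform N) hδ
      fun i _ => (uniformPartition_succ_sub a b N i).le

end AlmostAdditiveOn

end Sewing

section Holder

variable {X : Type*} [NormedAddCommGroup X] {β a b s t : ℝ}

lemma holderNorm_nonneg (β a b : ℝ) (f : ℝ → X) : 0 ≤ holderNorm β a b f := by
  refine Real.sSup_nonneg ?_
  rintro _ ⟨s, t, -, -, -, rfl⟩
  positivity

lemma holder2Norm_nonneg (β a b : ℝ) (R : ℝ → ℝ → X) : 0 ≤ holder2Norm β a b R := by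
  refine Real.sSup_nonneg ?_
  rintro _ ⟨s, t, -, -, hst, rfl⟩
  exact div_nonneg (norm_nonneg _) (Real.rpow_nonneg (sub_nonneg.2 hst.le) _)

lemma norm_le_holder2Norm_mul_rpow {R : ℝ → ℝ → X} (hR : BddAbove (holder2Set β a b R))
    (hdiag : R s s = 0) (has : a ≤ s) (hst : s ≤ t) (htb : t ≤ b) :
    ‖R s t‖ ≤ holder2Norm β a b R * (t - s) ^ β := by
  rcases hst.eq_or_lt with rfl | hlt
  · rw [hdiag, norm_zero, sub_self]
    exact mul_nonneg (holder2Norm_nonneg β a b R) (Real.rpow_nonneg le_rfl β)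
  · rw [← div_le_iff₀ (Real.rpow_pos_of_pos (sub_pos.2 hlt) β)]
    exact le_csSup hR ⟨s, t, ⟨has, hst.trans htb⟩, ⟨has.trans hst, htb⟩, hlt, rfl⟩

lemma norm_sub_le_holderNorm_mul_rpow {f : ℝ → X} (hf : BddAbove (holderSet β a b f))
    (has : a ≤ s) (hst : s ≤ t) (htb : t ≤ b) :
    ‖f t - f s‖ ≤ holderNorm β a b f * (t - s) ^ β := by
  rcases hst.eq_or_lt with rfl | hlt
  · rw [sub_self, norm_zero, sub_self]
    exact mul_nonneg (holderNorm_nonneg β a b f) (Real.rpow_nonneg le_rfl β)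
  · rw [← div_le_iff₀ (Real.rpow_pos_of_pos (sub_pos.2 hlt) β), ← abs_of_pos (sub_pos.2 hlt)]
    exact le_csSup hf ⟨s, t, ⟨has, hst.trans htb⟩, ⟨has.trans hst, htb⟩, hlt.ne, rfl⟩

end Holder

section RoughGerm

variable {d : ℕ} {X : Type*} [NormedAddCommGroup X] [NormedSpace ℝ X]

lemma bilApply_add_right (B : (Fin d → ℝ) →L[ℝ] ((Fin d → ℝ) →L[ℝ] X))
    (M N : Fin d → Fin d → ℝ) : bilApply B (M + N) = bilApply B M + bilApply B N := by
  simp only [bilApply, Pi.add_apply, add_smul, Finset.sum_add_distrib]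

lemma bilApply_sub_left (B B' : (Fin d → ℝ) →L[ℝ] ((Fin d → ℝ) →L[ℝ] X))
    (M : Fin d → Fin d → ℝ) : bilApply (B - B') M = bilApply B M - bilApply B' M := by
  simp only [bilApply, sub_apply, smul_sub, Finset.sum_sub_distrib]

lemma bilApply_tensor (B : (Fin d → ℝ) →L[ℝ] ((Fin d → ℝ) →L[ℝ] X)) (x y : Fin d → ℝ) :
    bilApply B (fun i j => x i * y j) = B x y := by
  conv_rhs => rw [pi_eq_sum_univ' x, pi_eq_sum_univ' y]
  simp only [map_sum, map_smul, sum_apply, smul_apply, bilApply, mul_smul, Finset.smul_sum]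
  rw [Finset.sum_comm]
  exact Finset.sum_congr rfl fun j _ => Finset.sum_congr rfl fun i _ => smul_comm _ _ _

-- The factor `d ^ 2` bounds the projective tensor norm of `M` by the sup norm of its entries.
lemma norm_bilApply_le (B : (Fin d → ℝ) →L[ℝ] ((Fin d → ℝ) →L[ℝ] X)) (M : Fin d → Fin d → ℝ) :
    ‖bilApply B M‖ ≤ (d : ℝ) ^ 2 * (‖B‖ * ‖M‖) := by
  have hterm (i j : Fin d) : ‖M i j • B (Pi.single i 1) (Pi.single j 1)‖ ≤ ‖B‖ * ‖M‖ := by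
    have hB : ‖B (Pi.single i 1) (Pi.single j 1)‖ ≤ ‖B‖ := by
      simpa only [Pi.norm_single, norm_one, mul_one] using
        B.le_opNorm₂ (Pi.single i 1) (Pi.single j 1)
    rw [norm_smul, mul_comm]
    exact mul_le_mul hB ((norm_le_pi_norm (M i) j).trans (norm_le_pi_norm M i))
      (norm_nonneg _) (ContinuousLinearMap.opNorm_nonneg _)
  calc ‖bilApply B M‖
      ≤ ∑ _i : Fin d, ∑ _j : Fin d, ‖B‖ * ‖M‖ :=
        norm_sum_le_of_le _ fun i _ => norm_sum_le_of_le _ fun j _ => hterm i j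
    _ = (d : ℝ) ^ 2 * (‖B‖ * ‖M‖) := by
        simp only [Finset.sum_const, Finset.card_univ, Fintype.card_fin, nsmul_eq_mul]
        ring

/-- The germ `Y_s (W_t - W_s) + Y'_s 𝕎_{s,t}` whose compensated Riemann sums define the rough
integral of `(Y,Y')` against `(W,𝕎)`. -/
def roughGerm (W : ℝ → Fin d → ℝ) (WW : ℝ → ℝ → Fin d → Fin d → ℝ)
    (Y : ℝ → (Fin d → ℝ) →L[ℝ] X) (Y' : ℝ → (Fin d → ℝ) →L[ℝ] ((Fin d → ℝ) →L[ℝ] X))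
    (s t : ℝ) : X :=
  Y s (W t - W s) + bilApply (Y' s) (WW s t)

variable {W : ℝ → Fin d → ℝ} {WW : ℝ → ℝ → Fin d → Fin d → ℝ} {Y : ℝ → (Fin d → ℝ) →L[ℝ] X}
  {Y' : ℝ → (Fin d → ℝ) →L[ℝ] ((Fin d → ℝ) →L[ℝ] X)} {α a b s u t : ℝ}

lemma roughGerm_defect
    (hchen : WW s t - WW s u - WW u t = fun i j => (W u - W s) i * (W t - W u) j) :
    roughGerm W WW Y Y' s t - roughGerm W WW Y Y' s u - roughGerm W WW Y Y' u t =
      -(rem W Y Y' s u (W t - W u) + bilApply (Y' u - Y' s) (WW u t)) := by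
  have hWW : WW s t = (fun i j => (W u - W s) i * (W t - W u) j) + WW s u + WW u t := by
    rw [← hchen]
    abel
  have hW : W t - W s = (W t - W u) + (W u - W s) := by abel
  simp only [roughGerm, rem, hWW, hW, bilApply_add_right, bilApply_tensor, bilApply_sub_left,
    map_add, sub_apply]
  abel

lemma apply_self_eq_zero_of_chen
    (hchen : WW s s - WW s s - WW s s = fun i j => (W s - W s) i * (W s - W s) j) :
    WW s s = 0 := by
  simpa [funext_iff] using hchen

lemma rpow_two_mul_mul_rpow_le {x y l : ℝ} (hα : 0 < α) (hx : 0 ≤ x) (hxl : x ≤ l) (hy : 0 ≤ y)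
    (hyl : y ≤ l) : x ^ (2 * α) * y ^ α ≤ l ^ (3 * α) := by
  have hl := hx.trans hxl
  calc x ^ (2 * α) * y ^ α ≤ l ^ (2 * α) * l ^ α := by gcongr
    _ = l ^ (3 * α) := by
        rw [← Real.rpow_add' hl (by positivity)]
        congr 1
        ring

lemma norm_rem_apply_le (hα : 0 < α) (hW : BddAbove (holderSet α a b W))
    (hR : BddAbove (holder2Set (2 * α) a b (rem W Y Y')))
    (has : a ≤ s) (hsu : s ≤ u) (hut : u ≤ t) (htb : t ≤ b) :
    ‖rem W Y Y' s u (W t - W u)‖ ≤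
      holderNorm α a b W * holder2Norm (2 * α) a b (rem W Y Y') * (t - s) ^ (3 * α) := by
  have hdiag : rem W Y Y' s s = 0 := by simp [rem]
  have hR_le := norm_le_holder2Norm_mul_rpow hR hdiag has hsu (hut.trans htb)
  have hW_le := norm_sub_le_holderNorm_mul_rpow hW (has.trans hsu) hut htb
  have hW_nonneg := holderNorm_nonneg α a b W
  have hR_nonneg := holder2Norm_nonneg (2 * α) a b (rem W Y Y')
  calc ‖rem W Y Y' s u (W t - W u)‖
      ≤ ‖rem W Y Y' s u‖ * ‖W t - W u‖ := ContinuousLinearMap.le_opNorm _ _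
    _ ≤ (holder2Norm (2 * α) a b (rem W Y Y') * (u - s) ^ (2 * α)) *
          (holderNorm α a b W * (t - u) ^ α) :=
        mul_le_mul hR_le hW_le (norm_nonneg _) ((norm_nonneg _).trans hR_le)
    _ = holderNorm α a b W * holder2Norm (2 * α) a b (rem W Y Y') *
          ((u - s) ^ (2 * α) * (t - u) ^ α) := by ring
    _ ≤ _ := by
        gcongr
        exact rpow_two_mul_mul_rpow_le hα (by linarith) (by linarith) (by linarith) (by linarith)

lemma norm_bilApply_sub_le (hα : 0 < α) (hWW : BddAbove (holder2Set (2 * α) a b WW))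
    (hY' : BddAbove (holderSet α a b Y')) (hdiag : WW u u = 0)
    (has : a ≤ s) (hsu : s ≤ u) (hut : u ≤ t) (htb : t ≤ b) :
    ‖bilApply (Y' u - Y' s) (WW u t)‖ ≤ (d : ℝ) ^ 2 *
      (holder2Norm (2 * α) a b WW * holderNorm α a b Y' * (t - s) ^ (3 * α)) := by
  have hY'_le := norm_sub_le_holderNorm_mul_rpow hY' has hsu (hut.trans htb)
  have hWW_le := norm_le_holder2Norm_mul_rpow hWW hdiag (has.trans hsu) hut htb
  have hY'_nonneg := holderNorm_nonneg α a b Y'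
  have hWW_nonneg := holder2Norm_nonneg (2 * α) a b WW
  refine (norm_bilApply_le _ _).trans (mul_le_mul_of_nonneg_left ?_ (by positivity))
  calc ‖Y' u - Y' s‖ * ‖WW u t‖
      ≤ (holderNorm α a b Y' * (u - s) ^ α) *
          (holder2Norm (2 * α) a b WW * (t - u) ^ (2 * α)) :=
        mul_le_mul hY'_le hWW_le (norm_nonneg _)
          ((ContinuousLinearMap.opNorm_nonneg _).trans hY'_le)
    _ = holder2Norm (2 * α) a b WW * holderNorm α a b Y' *
          ((t - u) ^ (2 * α) * (u - s) ^ α) := by ring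
    _ ≤ _ := by
        gcongr
        exact rpow_two_mul_mul_rpow_le hα (by linarith) (by linarith) (by linarith) (by linarith)

theorem almostAdditiveOn_roughGerm (hα : 0 < α) (hW : BddAbove (holderSet α a b W))
    (hWW : BddAbove (holder2Set (2 * α) a b WW))
    (hchen : ∀ s u t : ℝ, a ≤ s → s ≤ u → u ≤ t → t ≤ b →
      WW s t - WW s u - WW u t = fun i j => (W u - W s) i * (W t - W u) j)
    (hY' : BddAbove (holderSet α a b Y'))
    (hR : BddAbove (holder2Set (2 * α) a b (rem W Y Y'))) :
    AlmostAdditiveOn (roughGerm W WW Y Y') a b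
      (((d : ℝ) ^ 2 + 1) * (holderNorm α a b W * holder2Norm (2 * α) a b (rem W Y Y') +
        holder2Norm (2 * α) a b WW * holderNorm α a b Y')) (3 * α) := by
  intro s u t has hsu hut htb
  have hau := has.trans hsu
  have hub := hut.trans htb
  have hrem_le := norm_rem_apply_le hα hW hR has hsu hut htb
  have hbil_le := norm_bilApply_sub_le hα hWW hY'
    (apply_self_eq_zero_of_chen (hchen u u u hau le_rfl le_rfl hub)) has hsu hut htb
  have hts : 0 ≤ (t - s) ^ (3 * α) := Real.rpow_nonneg (by linarith) _
  have hWR : 0 ≤ (d : ℝ) ^ 2 *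
      (holderNorm α a b W * holder2Norm (2 * α) a b (rem W Y Y') * (t - s) ^ (3 * α)) := by
    have := holderNorm_nonneg α a b W
    have := holder2Norm_nonneg (2 * α) a b (rem W Y Y')
    positivity
  have hWWY' : 0 ≤ holder2Norm (2 * α) a b WW * holderNorm α a b Y' * (t - s) ^ (3 * α) :=
    mul_nonneg (mul_nonneg (holder2Norm_nonneg _ _ _ _) (holderNorm_nonneg _ _ _ _)) hts
  rw [roughGerm_defect (hchen s u t has hsu hut htb), norm_neg]
  linarith [norm_add_le (rem W Y Y' s u (W t - W u)) (bilApply (Y' u - Y' s) (WW u t))]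

theorem stmt2_general [CompleteSpace X] (hα : 1 / 3 < α) (hW : BddAbove (holderSet α a b W))
    (hWW : BddAbove (holder2Set (2 * α) a b WW))
    (hchen : ∀ s u t : ℝ, a ≤ s → s ≤ u → u ≤ t → t ≤ b →
      WW s t - WW s u - WW u t = fun i j => (W u - W s) i * (W t - W u) j)
    (hY' : BddAbove (holderSet α a b Y'))
    (hR : BddAbove (holder2Set (2 * α) a b (rem W Y Y'))) :
    ∃ I : ℝ → ℝ → X, ∀ s ∈ Set.Icc a b, ∀ t ∈ Set.Icc a b, s ≤ t →
      PartitionLimit s t (roughGerm W WW Y Y') (I s t) ∧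
      ‖I s t - Y s (W t - W s) - bilApply (Y' s) (WW s t)‖ ≤
        sewingConst (3 * α) * ((d : ℝ) ^ 2 + 1) *
          (holderNorm α a b W * holder2Norm (2 * α) a b (rem W Y Y') +
            holder2Norm (2 * α) a b WW * holderNorm α a b Y') * (t - s) ^ (3 * α) := by
  have hadd := almostAdditiveOn_roughGerm (by linarith) hW hWW hchen hY' hR
  have hK : 0 ≤ ((d : ℝ) ^ 2 + 1) * (holderNorm α a b W * holder2Norm (2 * α) a b (rem W Y Y') +
      holder2Norm (2 * α) a b WW * holderNorm α a b Y') := by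
    have := holderNorm_nonneg α a b W
    have := holderNorm_nonneg α a b Y'
    have := holder2Norm_nonneg (2 * α) a b WW
    have := holder2Norm_nonneg (2 * α) a b (rem W Y Y')
    positivity
  choose! I hI using fun s (hs : s ∈ Set.Icc a b) t (ht : t ∈ Set.Icc a b) (hst : s ≤ t) =>
    (hadd.mono hs.1 ht.2).exists_partitionLimit hK (by linarith) hst
  refine ⟨I, fun s hs t ht hst => ⟨(hI s hs t ht hst).1, ?_⟩⟩
  simpa only [roughGerm, sub_sub, mul_assoc] using (hI s hs t ht hst).2

end RoughGerm

/-- Existence of the Gubinelli rough integral of a controlled rough path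
`(Y,Y')` against an `α`-Hölder rough path `(W,𝕎)`, together with the local estimate
`‖∫_s^t Y dW - Y_s W_{s,t} - Y'_s 𝕎_{s,t}‖ ≤ C (‖W‖_α ‖R^Y‖_{2α} + ‖𝕎‖_{2α} ‖Y'‖_α)
|t-s|^{3α}` with `C` depending only on `α`. -/
theorem stmt2 {d n : ℕ} (α : ℝ) (hα : 1/3 < α ∧ α ≤ 1/2) :
    ∃ C : ℝ, 0 < C ∧
      ∀ (W : ℝ → Fin d → ℝ) (WW : ℝ → ℝ → Fin d → Fin d → ℝ)
        (Y : ℝ → (Fin d → ℝ) →L[ℝ] (Fin n → ℝ))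
        (Y' : ℝ → (Fin d → ℝ) →L[ℝ] ((Fin d → ℝ) →L[ℝ] (Fin n → ℝ))),
        BddAbove (holderSet α 0 1 W) →
        BddAbove (holder2Set (2*α) 0 1 WW) →
        (∀ s u t : ℝ, 0 ≤ s → s ≤ u → u ≤ t → t ≤ 1 →
          WW s t - WW s u - WW u t = fun i j => (W u - W s) i * (W t - W u) j) →
        BddAbove (holderSet α 0 1 Y) →
        BddAbove (holderSet α 0 1 Y') →
        BddAbove (holder2Set (2*α) 0 1 (rem W Y Y')) →
        ∃ I : ℝ → ℝ → Fin n → ℝ,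
          ∀ s ∈ Set.Icc (0:ℝ) 1, ∀ t ∈ Set.Icc (0:ℝ) 1, s ≤ t →
            PartitionLimit s t
              (fun u v => (Y u) (W v - W u) + bilApply (Y' u) (WW u v)) (I s t) ∧
            ‖I s t - (Y s) (W t - W s) - bilApply (Y' s) (WW s t)‖ ≤
              C * (holderNorm α 0 1 W * holder2Norm (2*α) 0 1 (rem W Y Y')
                  + holder2Norm (2*α) 0 1 WW * holderNorm α 0 1 Y') * (t - s) ^ (3*α) := by
  exact ⟨sewingConst (3 * α) * ((d : ℝ) ^ 2 + 1),
    mul_pos (sewingConst_pos (by linarith)) (by positivity),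
    fun W WW Y Y' hW hWW hchen _ hY' hR => stmt2_general hα.1 hW hWW hchen hY' hR⟩
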